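/- For every integer m ≥ 2 and for every vertex labeling c : ℤ_{mp} → {1,…,m} of the circulant graph C(m,p) with p ≥ 2, there exists a nontrivial automorphism σ of C(m,p) such that c ∘ σ = c; in other words, no labeling of C(m,p) using at most m labels is distinguishing. -/

import Mathlib

/-!
For `p ≥ 2` the graph `C(m,p)` is a blow-up of the cycle on `ℤ_p`: adjacency of two vertices depends
only on their residues modulo `p`. With `m` labels there are as many pairs (residue, label) as
vertices. If two vertices have the same residue and the same label, swapping them is an automorphism
preserving the labeling. Otherwise, by counting, every pair (residue, label) occurs exactly once,
and the rotation `x ↦ x + 1` of the cycle lifts to an automorphism preserving the labeling.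
-/

/-- A permutation of the vertices is a graph automorphism if it preserves adjacency. -/
def IsGraphAut {V : Type*} (G : SimpleGraph V) (σ : Equiv.Perm V) : Prop :=
  ∀ u v : V, G.Adj (σ u) (σ v) ↔ G.Adj u v

/-- A labeling with `r` labels is distinguishing if no nontrivial automorphism preserves it. -/
def IsDistinguishing {V : Type*} (G : SimpleGraph V) {r : ℕ} (c : V → Fin r) : Prop :=
  ∀ σ : Equiv.Perm V, IsGraphAut G σ → (∀ v, c (σ v) = c v) → σ = Equiv.refl V

/-- The distinguishing number of a graph: the least `r` admitting an `r`-distinguishing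
labeling. -/
noncomputable def distinguishingNumber {V : Type*} (G : SimpleGraph V) : ℕ :=
  sInf {r : ℕ | ∃ c : V → Fin r, IsDistinguishing G c}

/-- The jump set `A = {p-1+r·p, p+1+r·p : 0 ≤ r ≤ m-1}` inside `ℤ_{mp}`. -/
def jumpSet (m p : ℕ) : Set (ZMod (m * p)) :=
  {a | ∃ r < m, a = ((p - 1 + r * p : ℕ) : ZMod (m * p)) ∨
                a = ((p + 1 + r * p : ℕ) : ZMod (m * p))}

/-- The circulant graph `C(m,p)` on vertex set `ℤ_{mp}`: `i` and `j` are adjacent iff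
`j - i (mod mp)` lies in the jump set. -/
def circC (m p : ℕ) : SimpleGraph (ZMod (m * p)) :=
  SimpleGraph.circulantGraph (jumpSet m p)

/-- The set `M_i = {i + r·p : 0 ≤ r ≤ m-1}` in `ℤ_{mp}`. -/
def Mset (m p i : ℕ) : Set (ZMod (m * p)) :=
  {v | ∃ r < m, v = ((i + r * p : ℕ) : ZMod (m * p))}

section LiftingPermutations

variable {V W : Type*} {f : V → W}

lemma exists_perm_ne_refl_of_not_injective (hf : ¬ Function.Injective f) :
    ∃ σ : Equiv.Perm V, σ ≠ Equiv.refl V ∧ ∀ v, f (σ v) = f v := by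
  classical
  obtain ⟨a, b, hab, hne⟩ := Function.not_injective_iff.mp hf
  exact ⟨Equiv.swap a b, mt Equiv.swap_eq_refl_iff.mp hne, Equiv.apply_swap_eq_self hab⟩

lemma exists_perm_ne_refl_semiconj_of_bijective (hf : Function.Bijective f) {τ : Equiv.Perm W}
    (hτ : τ ≠ Equiv.refl W) :
    ∃ σ : Equiv.Perm V, σ ≠ Equiv.refl V ∧ ∀ v, f (σ v) = τ (f v) := by
  have hsemiconj := (Equiv.ofBijective f hf).apply_symm_apply
  refine ⟨(Equiv.ofBijective f hf).symm.permCongr τ, fun hσ => hτ ?_, fun v => hsemiconj _⟩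
  rwa [← Equiv.permCongr_refl, Equiv.apply_eq_iff_eq] at hσ

end LiftingPermutations

section BlowUp

variable {V B L : Type*} {H : SimpleGraph B} {π : V → B}

lemma isGraphAut_refl (G : SimpleGraph V) : IsGraphAut G (Equiv.refl V) :=
  fun _ _ => Iff.rfl

lemma IsGraphAut.comap {τ : Equiv.Perm B} (hτ : IsGraphAut H τ) {σ : Equiv.Perm V}
    (hσ : ∀ v, π (σ v) = τ (π v)) : IsGraphAut (H.comap π) σ := by
  intro u v
  rw [SimpleGraph.comap_adj, SimpleGraph.comap_adj, hσ, hσ, hτ]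

theorem IsGraphAut.exists_comap_ne_refl_of_card_le [Nonempty V] [Finite B] [Finite L]
    (hcard : Nat.card B * Nat.card L ≤ Nat.card V) {τ : Equiv.Perm B} (hτ : IsGraphAut H τ)
    (hne : τ ≠ Equiv.refl B) (c : V → L) :
    ∃ σ : Equiv.Perm V, IsGraphAut (H.comap π) σ ∧ σ ≠ Equiv.refl V ∧ ∀ v, c (σ v) = c v := by
  let f : V → B × L := fun v => (π v, c v)
  by_cases hf : Function.Injective f
  · have hbij : Function.Bijective f :=
      hf.bijective_of_nat_card_le (by rwa [Nat.card_prod])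
    have hne' : τ.prodCongr (Equiv.refl L) ≠ Equiv.refl (B × L) := fun h =>
      hne <| Equiv.ext fun b =>
        congrArg Prod.fst (Equiv.congr_fun h (b, c (Classical.arbitrary V)))
    obtain ⟨σ, hσ, hfσ⟩ := exists_perm_ne_refl_semiconj_of_bijective hbij hne'
    exact ⟨σ, hτ.comap fun v => congrArg Prod.fst (hfσ v), hσ,
      fun v => congrArg Prod.snd (hfσ v)⟩
  · obtain ⟨σ, hσ, hfσ⟩ := exists_perm_ne_refl_of_not_injective hf
    exact ⟨σ, (isGraphAut_refl H).comap fun v => congrArg Prod.fst (hfσ v), hσ,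
      fun v => congrArg Prod.snd (hfσ v)⟩

end BlowUp

section Circulant

variable {G H : Type*} [AddGroup G] [AddGroup H]

lemma isGraphAut_circulantGraph_addRight (s : Set G) (d : G) :
    IsGraphAut (SimpleGraph.circulantGraph s) (Equiv.addRight d) :=
  fun _ _ => SimpleGraph.circulantGraph_adj_translate

lemma circulantGraph_preimage {F : Type*} [FunLike F G H] [AddMonoidHomClass F G H] (φ : F)
    {s : Set H} (hs : 0 ∉ s) :
    SimpleGraph.circulantGraph (φ ⁻¹' s) = (SimpleGraph.circulantGraph s).comap φ := by
  ext u v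
  simp only [SimpleGraph.circulantGraph_adj, SimpleGraph.comap_adj, Set.mem_preimage, map_sub]
  refine and_congr_left fun hmem => ⟨fun _ hφ => hs ?_, ne_of_apply_ne φ⟩
  simpa only [hφ, sub_self, or_self] using hmem

end Circulant

section Residues

/-- Reduction modulo `p` on the vertex set `ℤ_{mp}` of `C(m,p)`; its fibres are the independent
sets that replace the vertices of the cycle on `ℤ_p` in the blow-up. -/
def residueHom (m p : ℕ) : ZMod (m * p) →+* ZMod p :=
  ZMod.castHom (dvd_mul_left p m) (ZMod p)

variable (m p : ℕ)

lemma Mset_eq_preimage_residueHom [NeZero m] [NeZero p] (i : ℕ) :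
    Mset m p i = residueHom m p ⁻¹' {(i : ZMod p)} := by
  ext v
  constructor
  · rintro ⟨r, -, rfl⟩
    simp
  · intro (hv : residueHom m p v = i)
    have hcast : (((v - i).val : ℕ) : ZMod (m * p)) = v - i := ZMod.natCast_zmod_val _
    have hdvd : p ∣ (v - i).val := by
      rw [← ZMod.natCast_eq_zero_iff, ← map_natCast (residueHom m p), hcast, map_sub,
        map_natCast, hv, sub_self]
    obtain ⟨r, hr⟩ := exists_eq_mul_left_of_dvd hdvd
    refine ⟨r, Nat.lt_of_mul_lt_mul_right (hr ▸ ZMod.val_lt _), ?_⟩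
    rw [Nat.cast_add, ← hr, hcast, add_sub_cancel]

lemma jumpSet_eq_union_Mset : jumpSet m p = Mset m p (p - 1) ∪ Mset m p (p + 1) := by
  ext a
  simp only [jumpSet, Mset, Set.mem_union, Set.mem_ofPred_eq, ← exists_or, ← and_or_left]

lemma jumpSet_eq_preimage_residueHom [NeZero m] [NeZero p] :
    jumpSet m p = residueHom m p ⁻¹' {-1, 1} := by
  have hpred : ((p - 1 : ℕ) : ZMod p) = -1 := by
    rw [Nat.cast_pred (NeZero.pos p), ZMod.natCast_self, zero_sub]
  have hsucc : ((p + 1 : ℕ) : ZMod p) = 1 := by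
    rw [Nat.cast_succ, ZMod.natCast_self, zero_add]
  rw [jumpSet_eq_union_Mset, Mset_eq_preimage_residueHom, Mset_eq_preimage_residueHom, hpred,
    hsucc, ← Set.preimage_union, Set.singleton_union]

lemma circC_eq_comap_circulantGraph [NeZero m] [Fact (1 < p)] :
    circC m p = (SimpleGraph.circulantGraph {-1, 1}).comap (residueHom m p) := by
  have : NeZero p := ⟨(zero_lt_one.trans Fact.out).ne'⟩
  rw [circC, jumpSet_eq_preimage_residueHom, circulantGraph_preimage]
  simp

end Residues

theorem stmt_19 (m p : ℕ) (hm : 2 ≤ m) (hp : 2 ≤ p) (c : ZMod (m * p) → Fin m) :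
    ∃ σ : Equiv.Perm (ZMod (m * p)), IsGraphAut (circC m p) σ ∧
      σ ≠ Equiv.refl (ZMod (m * p)) ∧ ∀ v, c (σ v) = c v := by
  have : NeZero m := ⟨by lia⟩
  have : NeZero p := ⟨by lia⟩
  have : Fact (1 < p) := ⟨hp⟩
  have hcard : Nat.card (ZMod p) * Nat.card (Fin m) ≤ Nat.card (ZMod (m * p)) := by
    rw [Nat.card_zmod, Nat.card_zmod, Nat.card_fin, mul_comm]
  have hrot : Equiv.addRight (1 : ZMod p) ≠ Equiv.refl (ZMod p) := fun h =>
    one_ne_zero (α := ZMod p) (by simpa using Equiv.congr_fun h 0)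
  rw [circC_eq_comap_circulantGraph]
  exact (isGraphAut_circulantGraph_addRight _ 1).exists_comap_ne_refl_of_card_le hcard hrot c
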